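/- For every integer N ≥ 2 and every N-point set P in [0,1)², the L₂-discrepancy of P satisfies ‖D_P | L₂‖ ≥ √(317/(172032·log 2)) · √(log N) (numerically, ‖D_P | L₂‖ ≥ 0.0515599… · √(log N)). -/

import Mathlib

open MeasureTheory

noncomputable section

/-- The half-open unit square `[0,1) × [0,1)` in `ℝ × ℝ`. -/
def unitSq : Set (ℝ × ℝ) := Set.Ico (0:ℝ) 1 ×ˢ Set.Ico (0:ℝ) 1

/-- The discrepancy function of the point configuration `p` :
`D_P(x) = Σ_i χ_{[0,x₁)×[0,x₂)}(p i) − N·x₁·x₂`. -/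
def disc (N : ℕ) (p : Fin N → ℝ × ℝ) (x : ℝ × ℝ) : ℝ :=
  (∑ i : Fin N, if 0 ≤ (p i).1 ∧ (p i).1 < x.1 ∧ 0 ≤ (p i).2 ∧ (p i).2 < x.2
    then (1:ℝ) else 0) - N * x.1 * x.2

/-- The `L₂`-discrepancy `‖D_P | L₂‖ = (∫_{[0,1)²} D_P(x)² dx)^{1/2}`. -/
def L2disc (N : ℕ) (p : Fin N → ℝ × ℝ) : ℝ :=
  Real.sqrt (∫ x in unitSq, disc N p x ^ 2)

/-!
The squared `L₂`-norm of `D_P` dominates its energy on the tensor Haar functions of any finite set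
of dyadic levels `(i, k)`. Let `λ = N / 2 ^ (i + k)` and, for a point `x` of `P`, let
`z = 16 ‖2 ^ i x₁‖ ‖2 ^ k x₂‖`, where `‖·‖` is the distance to the nearest integer. The Haar
coefficients of the boxes `(x₁, 1) × (x₂, 1)` are nonnegative, so the square of their sum over the
points dominates the sum of their squares. Hence 256 times the energy of the level is at least the
mean over `x ∈ P` of `λ² - λ z (2 λ - z)`.

Single levels can have tiny energy, but a point that is bad for one level is not bad for its
successors. Weight the levels `(i + u, k + v)`, `u + v ≤ 2`, as three generations of the branching
`(i, k) ↦ (i + 1, k), (i, k + 1)` with equal weights. For `λ ∈ [3/4, 3/2]` every point then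
contributes at least `317 / 672`: the vector `(‖y‖, ‖2 y‖, ‖4 y‖)` runs through a polygonal path,
and replacing `z (2 λ - z)`, concave in `z`, by tangents leaves a biaffine function on each pair of
edges, to be checked at vertices only; in `λ` the claim reduces to `λ = 3/4` and `λ = 3/2`. Summing
over the `m + 1` levels with `i + k = m`, where `N / 2 ^ m ∈ [3/4, 3/2]`, uses each level of the
three diagonals `m`, `m + 1`, `m + 2` with total weight at most one, and `log N` is at most
`(m + 1) log 2`.
-/

section Averaging

lemma card_mul_sq_add_sum_le_sum_sq_sub {ι κ : Type*} (s : Finset ι) (t : Finset κ)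
    {X : ι → κ → ℝ} (hX : ∀ a b, 0 ≤ X a b) (c : ℝ) :
    s.card * c ^ 2 + ∑ b ∈ t, (∑ a ∈ s, X a b ^ 2 - 2 * c * ∑ a ∈ s, X a b) ≤
      ∑ a ∈ s, (∑ b ∈ t, X a b - c) ^ 2 := by
  have h_sq (a : ι) : ∑ b ∈ t, X a b ^ 2 ≤ (∑ b ∈ t, X a b) ^ 2 :=
    Finset.sum_sq_le_sq_sum_of_nonneg fun b _ => hX a b
  calc s.card * c ^ 2 + ∑ b ∈ t, (∑ a ∈ s, X a b ^ 2 - 2 * c * ∑ a ∈ s, X a b)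
      = ∑ a ∈ s, (∑ b ∈ t, X a b ^ 2 - 2 * c * ∑ b ∈ t, X a b + c ^ 2) := by
        rw [Finset.sum_sub_distrib, ← Finset.mul_sum, Finset.sum_comm, Finset.sum_comm (s := t),
          Finset.sum_add_distrib, Finset.sum_sub_distrib, ← Finset.mul_sum, Finset.sum_const,
          nsmul_eq_mul]
        ring
    _ ≤ ∑ a ∈ s, (∑ b ∈ t, X a b - c) ^ 2 :=
        Finset.sum_le_sum fun a _ => by linarith [h_sq a, sub_sq (∑ b ∈ t, X a b) c]

/-- The average of the values of `G` at `(u, v)`, weighted by `choose (u + v) u / 2 ^ (u + v)`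
on the three diagonals `u + v = 0, 1, 2`: three generations of the branching
`(i, k) ↦ (i + 1, k), (i, k + 1)` with equal weights. -/
def cluster (G : Fin 3 → Fin 3 → ℝ) : ℝ :=
  G 0 0 + (G 1 0 + G 0 1) / 2 + (G 2 0 + 2 * G 1 1 + G 0 2) / 4

lemma cluster_mono {G H : Fin 3 → Fin 3 → ℝ} (h : ∀ u v, G u v ≤ H u v) :
    cluster G ≤ cluster H := by
  unfold cluster
  linarith [h 0 0, h 1 0, h 0 1, h 2 0, h 1 1, h 0 2]

lemma cluster_add (G H : Fin 3 → Fin 3 → ℝ) :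
    cluster (fun u v => G u v + H u v) = cluster G + cluster H := by
  unfold cluster; ring

lemma cluster_mul_left (a : ℝ) (G : Fin 3 → Fin 3 → ℝ) :
    cluster (fun u v => a * G u v) = a * cluster G := by
  unfold cluster; ring

lemma cluster_sum {ι : Type*} (s : Finset ι) (G : ι → Fin 3 → Fin 3 → ℝ) :
    cluster (fun u v => ∑ r ∈ s, G r u v) = ∑ r ∈ s, cluster (G r) := by
  simp only [cluster, Finset.sum_add_distrib, ← Finset.sum_div, ← Finset.mul_sum]

lemma cluster_transpose (G : Fin 3 → Fin 3 → ℝ) : cluster (fun u v => G v u) = cluster G := by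
  unfold cluster; ring

open Finset in
lemma sum_antidiagonal_average_le {E : ℕ × ℕ → ℝ} (hE : ∀ j, 0 ≤ E j) (m : ℕ) :
    ∑ j ∈ antidiagonal m, (E (j.1 + 1, j.2) + E (j.1, j.2 + 1)) / 2 ≤
      ∑ j ∈ antidiagonal (m + 1), E j := by
  have h_left := Nat.sum_antidiagonal_succ (n := m) (f := E)
  have h_right := Nat.sum_antidiagonal_succ' (n := m) (f := E)
  rw [← sum_div, sum_add_distrib]
  linarith [hE (0, m + 1), hE (m + 1, 0)]

open Finset in
lemma sum_antidiagonal_cluster_le {E : ℕ × ℕ → ℝ} (hE : ∀ j, 0 ≤ E j) (m : ℕ) :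
    ∑ j ∈ antidiagonal m, cluster (fun u v => E (j.1 + u, j.2 + v)) ≤
      ∑ n ∈ range 3, ∑ j ∈ antidiagonal (m + n), E j := by
  set E' : ℕ × ℕ → ℝ := fun j => (E (j.1 + 1, j.2) + E (j.1, j.2 + 1)) / 2
  have hE' : ∀ j, 0 ≤ E' j := fun j => div_nonneg (add_nonneg (hE _) (hE _)) zero_le_two
  have h_split (j : ℕ × ℕ) : cluster (fun u v => E (j.1 + u, j.2 + v)) =
      E j + E' j + (E' (j.1 + 1, j.2) + E' (j.1, j.2 + 1)) / 2 := by
    simp only [cluster, E', Fin.val_zero, Fin.val_one, Fin.val_two, add_zero, add_assoc,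
      Nat.reduceAdd]
    ring
  calc ∑ j ∈ antidiagonal m, cluster (fun u v => E (j.1 + u, j.2 + v))
      = ∑ j ∈ antidiagonal m, E j + ∑ j ∈ antidiagonal m, E' j
          + ∑ j ∈ antidiagonal m, (E' (j.1 + 1, j.2) + E' (j.1, j.2 + 1)) / 2 := by
        simp only [h_split, sum_add_distrib]
    _ ≤ ∑ j ∈ antidiagonal m, E j + ∑ j ∈ antidiagonal (m + 1), E j
          + ∑ j ∈ antidiagonal (m + 2), E j :=
        add_le_add (add_le_add le_rfl (sum_antidiagonal_average_le hE m))
          ((sum_antidiagonal_average_le hE' m).trans (sum_antidiagonal_average_le hE (m + 1)))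
    _ = _ := by simp only [sum_range_succ, sum_range_zero, zero_add, add_zero]

end Averaging

section Convexity

lemma le_of_mem_convexHull_of_convexOn {E F : Type*} [AddCommGroup E] [Module ℝ E]
    [AddCommGroup F] [Module ℝ F] {f : E → F → ℝ} (hf_left : ∀ w, ConvexOn ℝ Set.univ (f · w))
    (hf_right : ∀ v, ConvexOn ℝ Set.univ (f v)) {s : Set E} {t : Set F} {K : ℝ}
    (h : ∀ v ∈ s, ∀ w ∈ t, f v w ≤ K) {v : E} {w : F} (hv : v ∈ convexHull ℝ s)
    (hw : w ∈ convexHull ℝ t) : f v w ≤ K := by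
  have h_vertex (v' : E) (hv' : v' ∈ s) : f v' w ≤ K :=
    have h_subset : t ⊆ {w' ∈ Set.univ | f v' w' ≤ K} := fun w' hw' => ⟨trivial, h v' hv' w' hw'⟩
    (convexHull_min h_subset ((hf_right v').convex_le K) hw).2
  have h_subset : s ⊆ {v' ∈ Set.univ | f v' w ≤ K} := fun v' hv' => ⟨trivial, h_vertex v' hv'⟩
  exact (convexHull_min h_subset ((hf_left w).convex_le K) hv).2

lemma quadratic_le_of_endpoints {α β K a b x : ℝ} (ha : 0 ≤ a) (hβ : 0 ≤ β)
    (hx : x ∈ Set.Icc a b) (h_a : α * a ^ 2 - β * a ≤ K) (h_b : α * b ^ 2 - β * b ≤ K) :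
    α * x ^ 2 - β * x ≤ K := by
  obtain ⟨hax, hxb⟩ := hx
  rcases le_total α 0 with hα | hα
  · calc α * x ^ 2 - β * x ≤ α * a ^ 2 - β * a :=
          sub_le_sub (mul_le_mul_of_nonpos_left (by gcongr) hα) (by gcongr)
      _ ≤ K := h_a
  · have h_convex : ConvexOn ℝ (Set.Icc a b) fun y => α * y ^ 2 - β * y :=
      ((convexOn_pow 2).smul hα |>.subset (fun y hy => ha.trans hy.1) (convex_Icc a b)).sub
        (((concaveOn_id (convex_Icc a b)).smul hβ))
    exact (h_convex.le_max_of_mem_Icc ⟨le_rfl, hax.trans hxb⟩ ⟨hax.trans hxb, le_rfl⟩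
      ⟨hax, hxb⟩).trans (max_le h_a h_b)

end Convexity

section Orbits

/-- The distance from `y` to the nearest integer. -/
def distInt (y : ℝ) : ℝ := |y - round y|

lemma distInt_nonneg (y : ℝ) : 0 ≤ distInt y := abs_nonneg _

lemma distInt_le_half (y : ℝ) : distInt y ≤ 1 / 2 := abs_sub_round y

lemma distInt_eq_min (y : ℝ) : distInt y = min (Int.fract y) (1 - Int.fract y) :=
  abs_sub_round_eq_min y

lemma distInt_two_mul (y : ℝ) : distInt (2 * y) = min (2 * distInt y) (1 - 2 * distInt y) := by
  have h0 := Int.fract_nonneg y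
  have h1 := Int.fract_lt_one y
  have h_floor : (2 : ℝ) * y = 2 * Int.fract y + (2 * ⌊y⌋ : ℤ) := by
    push_cast; linarith [Int.self_sub_floor y]
  rw [distInt_eq_min, distInt_eq_min, h_floor, Int.fract_add_intCast]
  generalize Int.fract y = t at h0 h1
  rcases lt_or_ge t (1 / 2) with h | h
  · rw [Int.fract_eq_self.2 ⟨by linarith, by linarith⟩, min_eq_left (a := t) (by linarith)]
  · rw [← Int.fract_sub_one, Int.fract_eq_self.2 ⟨by linarith, by linarith⟩,
      min_eq_right (a := t) (by linarith), min_comm]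
    congr 1 <;> ring

/-- The initial piece `‖y‖, ‖2y‖, ‖4y‖` of the orbit of the doubling map, `‖·‖` being the distance
to the nearest integer. -/
def doublingOrbit (y : ℝ) : Fin 3 → ℝ := ![distInt y, distInt (2 * y), distInt (4 * y)]

/-- The doubling orbit of `i / 8`. On `[0, 1/2]` the map `doublingOrbit` is piecewise affine with
these values at its break points. -/
def knot : Fin 5 → Fin 3 → ℝ :=
  ![![0, 0, 0], ![1 / 8, 1 / 4, 1 / 2], ![1 / 4, 1 / 2, 0], ![3 / 8, 1 / 4, 1 / 2], ![1 / 2, 0, 0]]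

lemma doublingOrbit_apply (y : ℝ) (u : Fin 3) : doublingOrbit y u = distInt (2 ^ (u : ℕ) * y) := by
  fin_cases u <;> norm_num [doublingOrbit]

lemma doublingOrbit_mem_segment (y : ℝ) :
    ∃ i : Fin 4, doublingOrbit y ∈ segment ℝ (knot i.castSucc) (knot i.succ) := by
  have h4 : distInt (4 * y) = min (2 * distInt (2 * y)) (1 - 2 * distInt (2 * y)) := by
    rw [← distInt_two_mul]; ring_nf
  have h0 := distInt_nonneg y
  have h1 := distInt_le_half y
  rw [distInt_two_mul] at h4
  unfold doublingOrbit
  rw [h4, distInt_two_mul]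
  generalize distInt y = d at h0 h1
  have h_piece (i : Fin 4) (h_left : ((i : ℕ) : ℝ) ≤ 8 * d) (h_right : 8 * d ≤ ((i : ℕ) : ℝ) + 1) :
      ![d, min (2 * d) (1 - 2 * d), min (2 * min (2 * d) (1 - 2 * d))
        (1 - 2 * min (2 * d) (1 - 2 * d))] ∈ segment ℝ (knot i.castSucc) (knot i.succ) := by
    refine ⟨1 - (8 * d - (i : ℕ)), 8 * d - (i : ℕ), by linarith, by linarith, by ring, ?_⟩
    ext u
    fin_cases i <;> fin_cases u <;> simp [knot] at * <;> grind
  rcases le_total (8 * d) 2 with h | h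
  · rcases le_total (8 * d) 1 with h' | h'
    · exact ⟨0, h_piece 0 (by norm_num; linarith) (by norm_num; linarith)⟩
    · exact ⟨1, h_piece 1 (by norm_num; linarith) (by norm_num; linarith)⟩
  · rcases le_total (8 * d) 3 with h' | h'
    · exact ⟨2, h_piece 2 (by norm_num; linarith) (by norm_num; linarith)⟩
    · exact ⟨3, h_piece 3 (by norm_num; linarith) (by norm_num; linarith)⟩

end Orbits

section Gain

/-- What a point `x` of an `N`-point set can subtract from the lower bound for the Haar energy of
level `(i, k)`, up to normalisation: `l = N / 2 ^ (i + k)` is the mean number of points per box and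
`z = 16 ‖2 ^ i x₁‖ ‖2 ^ k x₂‖`. -/
def gain (l z : ℝ) : ℝ := l * z * (2 * l - z)

/-- The tangent of `gain l` at `c`. -/
def gainTangent (l c z : ℝ) : ℝ := 2 * l ^ 2 * z - l * (2 * c * z - c ^ 2)

lemma gain_le_gainTangent {l : ℝ} (hl : 0 ≤ l) (c z : ℝ) : gain l z ≤ gainTangent l c z := by
  have h_gap : gainTangent l c z - gain l z = l * (z - c) ^ 2 := by unfold gain gainTangent; ring
  exact sub_nonneg.1 (h_gap ▸ by positivity)

/-- The average gain over the cluster of levels above one level, for a point whose coordinates have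
the doubling orbits `v` and `w` there. -/
def clusterGain (l : ℝ) (v w : Fin 3 → ℝ) : ℝ :=
  cluster fun u t => gain (l / 2 ^ (u + t : ℕ)) (16 * v u * w t)

/-- The majorant of `clusterGain` given by tangents of the gains at the points `c u t`. It is affine
in `v` and in `w`. -/
def clusterTangent (l : ℝ) (c : Matrix (Fin 3) (Fin 3) ℝ) (v w : Fin 3 → ℝ) : ℝ :=
  cluster fun u t => gainTangent (l / 2 ^ (u + t : ℕ)) (c u t) (16 * v u * w t)

lemma clusterGain_comm (l : ℝ) (v w : Fin 3 → ℝ) : clusterGain l v w = clusterGain l w v := by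
  simp only [clusterGain, ← cluster_transpose fun u t => gain _ (16 * v u * w t), add_comm,
    mul_right_comm]

lemma clusterGain_le_of_mem_segment {l K : ℝ} (hl : 0 ≤ l) {v₀ v₁ w₀ w₁ v w : Fin 3 → ℝ}
    (c : Matrix (Fin 3) (Fin 3) ℝ)
    (hc : ∀ v' ∈ ({v₀, v₁} : Set _), ∀ w' ∈ ({w₀, w₁} : Set _), clusterTangent l c v' w' ≤ K)
    (hv : v ∈ segment ℝ v₀ v₁) (hw : w ∈ segment ℝ w₀ w₁) : clusterGain l v w ≤ K := by
  rw [← convexHull_pair] at hv hw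
  have h_tangent : clusterGain l v w ≤ clusterTangent l c v w :=
    cluster_mono fun u t => gain_le_gainTangent (by positivity) _ _
  refine h_tangent.trans (le_of_mem_convexHull_of_convexOn (fun w' => ?_) (fun v' => ?_) hc hv hw)
  all_goals
    refine ⟨convex_univ, fun x _ y _ a b _ _ hab => le_of_eq ?_⟩
    obtain rfl : a = 1 - b := by linarith
    simp only [clusterTangent, cluster, gainTangent, Pi.add_apply, Pi.smul_apply, smul_eq_mul]
    ring

-- The witnesses come from a numerical search for supporting tangents. Only the entries with
-- `u + t ≤ 2` matter.
lemma exists_clusterTangent_knot_le_of_three_quarters {i j : Fin 4} (hij : j ≤ i) :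
    ∃ c, ∀ v ∈ ({knot i.castSucc, knot i.succ} : Set _),
      ∀ w ∈ ({knot j.castSucc, knot j.succ} : Set _),
        clusterTangent (3 / 4) c v w ≤ 21 / 16 * (3 / 4) ^ 2 - 317 / 672 := by
  refine ⟨match i, j with
    | _, 0 => (1 / 16 : ℝ) • !![5, 11, 21; 3, 6, 0; 3, 0, 0]
    | 1, 1 => (1 / 2 : ℝ) • !![1, 1, 2; 1, 2, 0; 2, 0, 0]
    | _, 1 => !![1, 1, 2; 1, 2, 0; 0, 0, 0]
    | _, _ => !![2, 2, 0; 2, 2, 0; 0, 0, 0], ?_⟩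
  fin_cases i <;> fin_cases j <;>
    simp [clusterTangent, cluster, gainTangent, knot] at hij ⊢ <;> norm_num

lemma exists_clusterTangent_knot_le_of_three_halves {i j : Fin 4} (hij : j ≤ i) :
    ∃ c, ∀ v ∈ ({knot i.castSucc, knot i.succ} : Set _),
      ∀ w ∈ ({knot j.castSucc, knot j.succ} : Set _),
        clusterTangent (3 / 2) c v w ≤ 21 / 16 * (3 / 2) ^ 2 - 317 / 672 := by
  refine ⟨match i, j with
    | _, 0 => (1 / 2 : ℝ) • !![1, 3, 5; 1, 2, 0; 1, 0, 0]
    | 1, 1 => (1 / 2 : ℝ) • !![1, 2, 1; 2, 4, 0; 1, 0, 0]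
    | 2, 1 => (1 / 3 : ℝ) • !![3, 6, 5; 2, 5, 0; 3, 0, 0]
    | _, 1 => (1 / 8 : ℝ) • !![9, 17, 16; 4, 8, 0; 8, 0, 0]
    | 2, _ => (1 / 3 : ℝ) • !![5, 6, 5; 6, 5, 0; 5, 0, 0]
    | _, _ => !![2, 2, 0; 1, 1, 0; 2, 0, 0], ?_⟩
  fin_cases i <;> fin_cases j <;>
    simp [clusterTangent, cluster, gainTangent, knot] at hij ⊢ <;> norm_num

lemma clusterGain_doublingOrbit_le_of_exists {l K : ℝ} (hl : 0 ≤ l)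
    (h : ∀ i j : Fin 4, j ≤ i → ∃ c, ∀ v ∈ ({knot i.castSucc, knot i.succ} : Set _),
      ∀ w ∈ ({knot j.castSucc, knot j.succ} : Set _), clusterTangent l c v w ≤ K) (x y : ℝ) :
    clusterGain l (doublingOrbit x) (doublingOrbit y) ≤ K := by
  obtain ⟨i, hi⟩ := doublingOrbit_mem_segment x
  obtain ⟨j, hj⟩ := doublingOrbit_mem_segment y
  rcases le_total j i with hij | hij
  · obtain ⟨c, hc⟩ := h i j hij
    exact clusterGain_le_of_mem_segment hl c hc hi hj
  · obtain ⟨c, hc⟩ := h j i hij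
    exact clusterGain_comm l _ _ ▸ clusterGain_le_of_mem_segment hl c hc hj hi

lemma clusterGain_doublingOrbit_le {l : ℝ} (hl : l ∈ Set.Icc (3 / 4) (3 / 2)) (x y : ℝ) :
    clusterGain l (doublingOrbit x) (doublingOrbit y) ≤ 21 / 16 * l ^ 2 - 317 / 672 := by
  set v := doublingOrbit x
  set w := doublingOrbit y
  set α := cluster fun u t => 2 * (16 * v u * w t) / 4 ^ (u + t : ℕ) with hα
  set β := cluster fun u t => (16 * v u * w t) ^ 2 / 2 ^ (u + t : ℕ) with hβ
  have h_quadratic (l : ℝ) :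
      (α - 21 / 16) * l ^ 2 - β * l = clusterGain l v w - 21 / 16 * l ^ 2 := by
    rw [hα, hβ]
    simp only [clusterGain, cluster, gain, Fin.val_zero, Fin.val_one, Fin.val_two]
    ring
  have hβ_nonneg : 0 ≤ β := by rw [hβ]; unfold cluster; positivity
  have h_endpoint {l : ℝ} (h : clusterGain l v w ≤ 21 / 16 * l ^ 2 - 317 / 672) :
      (α - 21 / 16) * l ^ 2 - β * l ≤ -(317 / 672) := by rw [h_quadratic]; linarith
  have h_low := clusterGain_doublingOrbit_le_of_exists (l := 3 / 4) (by norm_num)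
    (fun _ _ hij => exists_clusterTangent_knot_le_of_three_quarters hij) x y
  have h_high := clusterGain_doublingOrbit_le_of_exists (l := 3 / 2) (by norm_num)
    (fun _ _ hij => exists_clusterTangent_knot_le_of_three_halves hij) x y
  have h_le := quadratic_le_of_endpoints (by norm_num) hβ_nonneg hl (h_endpoint h_low)
    (h_endpoint h_high)
  linarith [h_quadratic l]

end Gain

section Bessel

open scoped InnerProductSpace

lemma sum_sq_inner_div_sq_norm_le {ι E : Type*} [NormedAddCommGroup E] [InnerProductSpace ℝ E]
    {v : ι → E} {s : Finset ι} (hv : (s : Set ι).Pairwise fun a b => ⟪v a, v b⟫_ℝ = 0) (x : E) :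
    ∑ a ∈ s, ⟪x, v a⟫_ℝ ^ 2 / ‖v a‖ ^ 2 ≤ ‖x‖ ^ 2 := by
  set c : ι → ℝ := fun a => ⟪x, v a⟫_ℝ / ‖v a‖ ^ 2
  set p : E := ∑ a ∈ s, c a • v a with hp
  have h_mul (a : ι) : c a * ⟪v a, v a⟫_ℝ = ⟪x, v a⟫_ℝ := by
    rcases eq_or_ne (v a) 0 with h | h
    · simp only [h, inner_zero_right, mul_zero]
    · rw [real_inner_self_eq_norm_sq, div_mul_cancel₀ _ (by positivity)]
  have h_inner_proj (a : ι) (ha : a ∈ s) : ⟪p, v a⟫_ℝ = ⟪x, v a⟫_ℝ := by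
    rw [hp, sum_inner, Finset.sum_eq_single_of_mem a ha fun b hb hba => ?_,
      real_inner_smul_left, h_mul]
    rw [real_inner_smul_left, hv hb ha hba, mul_zero]
  have h_inner_left (y : E) : ⟪y, p⟫_ℝ = ∑ a ∈ s, c a * ⟪y, v a⟫_ℝ := by
    simp only [hp, inner_sum, real_inner_smul_right]
  have h_proj : ⟪x, p⟫_ℝ = ∑ a ∈ s, ⟪x, v a⟫_ℝ ^ 2 / ‖v a‖ ^ 2 := by
    rw [h_inner_left]
    exact Finset.sum_congr rfl fun a _ => by ring
  have h_sq : ‖p‖ ^ 2 = ⟪x, p⟫_ℝ := by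
    rw [← real_inner_self_eq_norm_sq, h_inner_left, h_inner_left]
    exact Finset.sum_congr rfl fun a ha => by rw [h_inner_proj a ha]
  linarith [norm_sub_sq_real x p, sq_nonneg ‖x - p‖]

lemma sum_sq_integral_mul_div_le {α ι : Type*} [MeasurableSpace α] {μ : Measure α} {f : α → ℝ}
    {e : ι → α → ℝ} (hf : MemLp f 2 μ) (he : ∀ a, MemLp (e a) 2 μ) {s : Finset ι}
    (h_orth : (s : Set ι).Pairwise fun a b => ∫ x, e a x * e b x ∂μ = 0) :
    ∑ a ∈ s, (∫ x, f x * e a x ∂μ) ^ 2 / ∫ x, e a x * e a x ∂μ ≤ ∫ x, f x ^ 2 ∂μ := by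
  have h_inner {g h : α → ℝ} (hg : MemLp g 2 μ) (hh : MemLp h 2 μ) :
      ⟪hg.toLp, hh.toLp⟫_ℝ = ∫ x, g x * h x ∂μ := by
    rw [L2.inner_def]
    refine integral_congr_ae ?_
    filter_upwards [hg.coeFn_toLp, hh.coeFn_toLp] with x hgx hhx
    rw [hgx, hhx]
    exact mul_comm (h x) (g x)
  have h_bessel := sum_sq_inner_div_sq_norm_le (v := fun a => (he a).toLp) (s := s)
    (fun a ha b hb hab => (h_inner _ _).trans (h_orth ha hb hab)) hf.toLp
  simpa only [← real_inner_self_eq_norm_sq, h_inner, ← sq] using h_bessel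

end Bessel

section Haar

/-- Lebesgue measure on the half-open unit interval. -/
abbrev unitVolume : Measure ℝ := volume.restrict (Set.Ico 0 1)

/-- The dyadic interval of level `j` with index `m`. -/
def dyadicIco (j m : ℕ) : Set ℝ := Set.Ico (m / 2 ^ j) ((m + 1) / 2 ^ j)

lemma measurableSet_dyadicIco (j m : ℕ) : MeasurableSet (dyadicIco j m) := measurableSet_Ico

lemma volume_real_dyadicIco (j m : ℕ) : volume.real (dyadicIco j m) = 1 / 2 ^ j := by
  rw [dyadicIco, Real.volume_real_Ico_of_le (by gcongr; linarith)]
  ring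

lemma mem_dyadicIco_iff_floor {j m : ℕ} {x : ℝ} : x ∈ dyadicIco j m ↔ ⌊2 ^ j * x⌋ = m := by
  rw [dyadicIco, Set.mem_Ico, Int.floor_eq_iff, div_le_iff₀' (by positivity),
    lt_div_iff₀' (by positivity), Int.cast_natCast]

lemma floor_two_pow_mul_of_le {j j' : ℕ} (hj : j ≤ j') (x : ℝ) :
    ⌊2 ^ j * x⌋ = ⌊2 ^ j' * x⌋ / (2 ^ (j' - j) : ℕ) := by
  rw [← Int.floor_div_natCast, Nat.cast_pow, Nat.cast_ofNat, mul_div_right_comm,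
    div_eq_mul_inv, ← pow_sub₀ _ two_ne_zero (Nat.sub_le j' j), Nat.sub_sub_self hj]

lemma mem_dyadicIco_congr {j j' m m' : ℕ} (hj : j ≤ j') {x y : ℝ} (hx : x ∈ dyadicIco j' m')
    (hy : y ∈ dyadicIco j' m') : x ∈ dyadicIco j m ↔ y ∈ dyadicIco j m := by
  rw [mem_dyadicIco_iff_floor] at hx hy
  rw [mem_dyadicIco_iff_floor, mem_dyadicIco_iff_floor, floor_two_pow_mul_of_le hj x,
    floor_two_pow_mul_of_le hj y, hx, hy]

lemma dyadicIco_eq_union (j m : ℕ) :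
    dyadicIco j m = dyadicIco (j + 1) (2 * m) ∪ dyadicIco (j + 1) (2 * m + 1) := by
  ext x
  simp only [Set.mem_union, mem_dyadicIco_iff_floor, floor_two_pow_mul_of_le j.le_succ x,
    Nat.succ_eq_add_one, Nat.add_sub_cancel_left]
  omega

lemma dyadicIco_subset_unitInterval {j m : ℕ} (hm : m < 2 ^ j) :
    dyadicIco j m ⊆ Set.Ico 0 1 := by
  refine Set.Ico_subset_Ico (by positivity) ?_
  rw [div_le_one (by positivity)]
  exact_mod_cast hm

lemma disjoint_dyadicIco {j m m' : ℕ} (h : m ≠ m') : Disjoint (dyadicIco j m) (dyadicIco j m') := by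
  refine Set.disjoint_left.2 fun x hx hx' => h ?_
  rw [mem_dyadicIco_iff_floor] at hx hx'
  exact_mod_cast hx.symm.trans hx'

/-- The Haar function on `dyadicIco j m`, normalised to have values in `{-1, 0, 1}`. -/
def haarFun (j m : ℕ) : ℝ → ℝ :=
  (dyadicIco (j + 1) (2 * m + 1)).indicator 1 - (dyadicIco (j + 1) (2 * m)).indicator 1

lemma haarFun_of_mem_left {j m : ℕ} {x : ℝ} (hx : x ∈ dyadicIco (j + 1) (2 * m)) :
    haarFun j m x = -1 := by
  have hx' := (disjoint_dyadicIco (2 * m).succ_ne_self.symm).notMem_of_mem_left hx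
  rw [haarFun, Pi.sub_apply, Set.indicator_of_mem hx, Set.indicator_of_notMem hx', Pi.one_apply,
    zero_sub]

lemma haarFun_of_mem_right {j m : ℕ} {x : ℝ} (hx : x ∈ dyadicIco (j + 1) (2 * m + 1)) :
    haarFun j m x = 1 := by
  have hx' := (disjoint_dyadicIco (2 * m).succ_ne_self).notMem_of_mem_left hx
  rw [haarFun, Pi.sub_apply, Set.indicator_of_mem hx, Set.indicator_of_notMem hx', Pi.one_apply,
    sub_zero]

lemma haarFun_of_notMem {j m : ℕ} {x : ℝ} (hx : x ∉ dyadicIco j m) : haarFun j m x = 0 := by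
  rw [dyadicIco_eq_union, Set.mem_union, not_or] at hx
  rw [haarFun, Pi.sub_apply, Set.indicator_of_notMem hx.1, Set.indicator_of_notMem hx.2, sub_zero]

lemma haarFun_congr {j j' m m' : ℕ} (hj : j ≤ j') (hne : ¬(j = j' ∧ m = m')) {x y : ℝ}
    (hx : x ∈ dyadicIco j' m') (hy : y ∈ dyadicIco j' m') : haarFun j m x = haarFun j m y := by
  rcases hj.eq_or_lt with rfl | hlt
  · have h_disj := disjoint_dyadicIco (j := j) fun h => hne ⟨rfl, h.symm⟩
    rw [haarFun_of_notMem (h_disj.notMem_of_mem_left hx),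
      haarFun_of_notMem (h_disj.notMem_of_mem_left hy)]
  · have h_indicator (n : ℕ) : (dyadicIco (j + 1) n).indicator (1 : ℝ → ℝ) x =
        (dyadicIco (j + 1) n).indicator 1 y := by
      have h_iff : x ∈ dyadicIco (j + 1) n ↔ y ∈ dyadicIco (j + 1) n :=
        mem_dyadicIco_congr (Nat.add_one_le_iff.2 hlt) hx hy
      classical
      simp only [Set.indicator_apply, h_iff, Pi.one_apply]
    rw [haarFun, Pi.sub_apply, Pi.sub_apply, h_indicator, h_indicator]

lemma measurable_haarFun (j m : ℕ) : Measurable (haarFun j m) :=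
  (measurable_one.indicator (measurableSet_dyadicIco _ _)).sub
    (measurable_one.indicator (measurableSet_dyadicIco _ _))

lemma norm_haarFun_le_one (j m : ℕ) (x : ℝ) : ‖haarFun j m x‖ ≤ 1 := by
  by_cases hx : x ∈ dyadicIco j m
  · rw [dyadicIco_eq_union] at hx
    rcases hx with hx | hx
    · rw [haarFun_of_mem_left hx, norm_neg, norm_one]
    · rw [haarFun_of_mem_right hx, norm_one]
  · rw [haarFun_of_notMem hx, norm_zero]
    exact zero_le_one

lemma integrable_haarFun {μ : Measure ℝ} [IsFiniteMeasure μ] (j m : ℕ) :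
    Integrable (haarFun j m) μ :=
  .of_bound (measurable_haarFun j m).aestronglyMeasurable 1
    (Filter.Eventually.of_forall (norm_haarFun_le_one j m))

lemma integral_mul_haarFun {f : ℝ → ℝ} (hf : Integrable f unitVolume) {j m : ℕ} (hm : m < 2 ^ j) :
    ∫ x, f x * haarFun j m x ∂unitVolume =
      (∫ x in dyadicIco (j + 1) (2 * m + 1), f x) - ∫ x in dyadicIco (j + 1) (2 * m), f x := by
  have h_split (x : ℝ) : f x * haarFun j m x =
      (dyadicIco (j + 1) (2 * m + 1)).indicator f x
        - (dyadicIco (j + 1) (2 * m)).indicator f x := by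
    simp only [haarFun, Pi.sub_apply, mul_sub, Set.indicator, Pi.one_apply, mul_ite, mul_one,
      mul_zero]
  have h_restrict {m' : ℕ} (hm' : m' < 2 ^ (j + 1)) :
      ∫ x, (dyadicIco (j + 1) m').indicator f x ∂unitVolume = ∫ x in dyadicIco (j + 1) m', f x := by
    rw [integral_indicator (measurableSet_dyadicIco _ _), unitVolume,
      Measure.restrict_restrict_of_subset (dyadicIco_subset_unitInterval hm')]
  rw [integral_congr_ae (Filter.Eventually.of_forall h_split),
    integral_sub (hf.indicator (measurableSet_dyadicIco _ _))
      (hf.indicator (measurableSet_dyadicIco _ _)), h_restrict (by omega), h_restrict (by omega)]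

lemma integral_mul_haarFun_of_eqOn {f : ℝ → ℝ} (hf : Integrable f unitVolume) {j m : ℕ}
    (hm : m < 2 ^ j) {α β : ℝ} (h_left : ∀ x ∈ dyadicIco (j + 1) (2 * m), f x = α)
    (h_right : ∀ x ∈ dyadicIco (j + 1) (2 * m + 1), f x = β) :
    ∫ x, f x * haarFun j m x ∂unitVolume = (β - α) / 2 ^ (j + 1) := by
  rw [integral_mul_haarFun hf hm, setIntegral_congr_fun (measurableSet_dyadicIco _ _) h_right,
    setIntegral_congr_fun (measurableSet_dyadicIco _ _) h_left, setIntegral_const,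
    setIntegral_const, volume_real_dyadicIco, volume_real_dyadicIco, smul_eq_mul, smul_eq_mul]
  ring

lemma integral_mul_haarFun_eq_zero {f : ℝ → ℝ} (hf : Integrable f unitVolume) {j m : ℕ}
    (hm : m < 2 ^ j) {α : ℝ} (h : ∀ x ∈ dyadicIco j m, f x = α) :
    ∫ x, f x * haarFun j m x ∂unitVolume = 0 := by
  rw [dyadicIco_eq_union] at h
  rw [integral_mul_haarFun_of_eqOn hf hm (fun x hx => h x (.inl hx)) (fun x hx => h x (.inr hx)),
    sub_self, zero_div]

lemma integral_haarFun_mul_self {j m : ℕ} (hm : m < 2 ^ j) :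
    ∫ x, haarFun j m x * haarFun j m x ∂unitVolume = 1 / 2 ^ j := by
  rw [integral_mul_haarFun_of_eqOn (integrable_haarFun j m) hm (fun _ => haarFun_of_mem_left)
    (fun _ => haarFun_of_mem_right)]
  ring

lemma integral_haarFun_mul_haarFun_of_ne {j j' m m' : ℕ} (hm : m < 2 ^ j) (hm' : m' < 2 ^ j')
    (hne : ¬(j = j' ∧ m = m')) : ∫ x, haarFun j m x * haarFun j' m' x ∂unitVolume = 0 := by
  wlog hj : j ≤ j' generalizing j j' m m'
  · simpa only [mul_comm] using this hm' hm (by tauto) (le_of_not_ge hj)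
  · have h_left_end : (m' / 2 ^ j' : ℝ) ∈ dyadicIco j' m' :=
      Set.left_mem_Ico.2 (by gcongr; linarith)
    exact integral_mul_haarFun_eq_zero (integrable_haarFun j m) hm'
      fun x hx => haarFun_congr hj hne hx h_left_end

lemma integrable_id_unitVolume : Integrable (fun x : ℝ => x) unitVolume :=
  continuous_id.integrableOn_Icc.mono_set Set.Ico_subset_Icc_self

lemma integral_id_mul_haarFun {j m : ℕ} (hm : m < 2 ^ j) :
    ∫ x, x * haarFun j m x ∂unitVolume = 1 / 4 ^ (j + 1) := by
  have h_interval (m' : ℕ) : ∫ x in dyadicIco (j + 1) m', x =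
      (((m' + 1) / 2 ^ (j + 1)) ^ 2 - (m' / 2 ^ (j + 1)) ^ 2) / 2 := by
    rw [dyadicIco, integral_Ico_eq_integral_Ioc,
      ← intervalIntegral.integral_of_le (by gcongr; linarith), integral_id]
  have h_four : (4 : ℝ) ^ (j + 1) = (2 ^ (j + 1)) ^ 2 := by rw [← pow_mul', pow_mul]; norm_num
  rw [integral_mul_haarFun integrable_id_unitVolume hm, h_interval, h_interval, h_four]
  push_cast
  ring

/-- The indicator function of `(c, ∞)`: for `c ≥ 0`, the indicator of `[0, x)` at `c` as a function
of `x`. -/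
def stepFun (c : ℝ) : ℝ → ℝ := (Set.Ioi c).indicator 1

lemma integrable_stepFun {μ : Measure ℝ} [IsFiniteMeasure μ] (c : ℝ) : Integrable (stepFun c) μ :=
  (integrable_const 1).indicator measurableSet_Ioi

lemma setIntegral_Ico_stepFun (c u v : ℝ) :
    ∫ x in Set.Ico u v, stepFun c x = max (v - max u c) 0 := by
  rw [integral_Ico_eq_integral_Ioc, stepFun, integral_indicator measurableSet_Ioi,
    Measure.restrict_restrict measurableSet_Ioi, Set.inter_comm, Set.Ioc_inter_Ioi]
  simp only [Pi.one_apply, setIntegral_const, Real.volume_real_Ioc, smul_eq_mul, mul_one]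

/-- The primitive of `-haarFun j m`, a hat of height `1 / 2 ^ (j + 1)` over `dyadicIco j m`. -/
def schauderHat (j m : ℕ) : ℝ → ℝ :=
  (dyadicIco j m).indicator fun c => distInt (2 ^ j * c) / 2 ^ j

lemma schauderHat_nonneg (j m : ℕ) (c : ℝ) : 0 ≤ schauderHat j m c :=
  Set.indicator_nonneg (fun _ _ => div_nonneg (distInt_nonneg _) (by positivity)) c

lemma schauderHat_of_mem {j m : ℕ} {c : ℝ} (hc : c ∈ dyadicIco j m) :
    schauderHat j m c = min (c - m / 2 ^ j) ((m + 1) / 2 ^ j - c) := by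
  have h_fract : Int.fract (2 ^ j * c) = 2 ^ j * c - m := by
    rw [Int.fract, mem_dyadicIco_iff_floor.1 hc, Int.cast_natCast]
  rw [schauderHat, Set.indicator_of_mem hc, distInt_eq_min, h_fract,
    ← min_div_div_right (by positivity)]
  congr 1 <;> field_simp
  ring

lemma integral_stepFun_mul_haarFun (c : ℝ) {j m : ℕ} (hm : m < 2 ^ j) :
    ∫ x, stepFun c x * haarFun j m x ∂unitVolume = schauderHat j m c := by
  have hd : (0 : ℝ) < 1 / 2 ^ (j + 1) := by positivity
  have h_left : dyadicIco (j + 1) (2 * m) =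
      Set.Ico (m / 2 ^ j : ℝ) (m / 2 ^ j + 1 / 2 ^ (j + 1)) := by
    rw [dyadicIco]; congr 1 <;> push_cast <;> field_simp <;> ring
  have h_right : dyadicIco (j + 1) (2 * m + 1) =
      Set.Ico (m / 2 ^ j + 1 / 2 ^ (j + 1) : ℝ) ((m + 1) / 2 ^ j) := by
    rw [dyadicIco]; congr 1 <;> push_cast <;> field_simp <;> ring
  have h_end : ((m : ℝ) + 1) / 2 ^ j = m / 2 ^ j + 2 * (1 / 2 ^ (j + 1)) := by field_simp; ring
  have h_mem : c ∈ dyadicIco j m ↔ m / 2 ^ j ≤ c ∧ c < m / 2 ^ j + 2 * (1 / 2 ^ (j + 1)) := by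
    rw [← h_end]; rfl
  rw [integral_mul_haarFun (integrable_stepFun c) hm, h_left, h_right, setIntegral_Ico_stepFun,
    setIntegral_Ico_stepFun]
  by_cases hc : c ∈ dyadicIco j m
  · rw [schauderHat_of_mem hc, h_end]
    grind
  · rw [schauderHat, Set.indicator_of_notMem hc, h_end]
    grind

lemma sum_schauderHat_pow (j : ℕ) {n : ℕ} (hn : n ≠ 0) {c : ℝ} (hc : c ∈ Set.Ico (0 : ℝ) 1) :
    ∑ m ∈ Finset.range (2 ^ j), schauderHat j m c ^ n = (distInt (2 ^ j * c) / 2 ^ j) ^ n := by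
  have h_nonneg : 0 ≤ 2 ^ j * c := mul_nonneg (by positivity) hc.1
  have h_mem : c ∈ dyadicIco j ⌊2 ^ j * c⌋₊ :=
    mem_dyadicIco_iff_floor.2 (Int.natCast_floor_eq_floor h_nonneg).symm
  have h_lt : ⌊2 ^ j * c⌋₊ < 2 ^ j := by
    rw [Nat.floor_lt h_nonneg]
    push_cast
    exact mul_lt_of_lt_one_right (by positivity) hc.2
  rw [Finset.sum_eq_single_of_mem _ (Finset.mem_range.2 h_lt) fun m _ hm => ?_, schauderHat,
    Set.indicator_of_mem h_mem]
  rw [schauderHat, Set.indicator_of_notMem ((disjoint_dyadicIco hm).notMem_of_mem_right h_mem),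
    zero_pow hn]

end Haar

section Tensor

/-- The tensor product of two Haar functions, of levels `j.1` and `j.2` and indices `m.1` and
`m.2`. -/
def haarTensor (j m : ℕ × ℕ) (x : ℝ × ℝ) : ℝ := haarFun j.1 m.1 x.1 * haarFun j.2 m.2 x.2

/-- The indices of the dyadic boxes of level `j` in the unit square. -/
def dyadicBoxes (j : ℕ × ℕ) : Finset (ℕ × ℕ) :=
  Finset.range (2 ^ j.1) ×ˢ Finset.range (2 ^ j.2)

lemma mem_dyadicBoxes {j m : ℕ × ℕ} : m ∈ dyadicBoxes j ↔ m.1 < 2 ^ j.1 ∧ m.2 < 2 ^ j.2 := by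
  rw [dyadicBoxes, Finset.mem_product, Finset.mem_range, Finset.mem_range]

lemma card_dyadicBoxes (j : ℕ × ℕ) : (dyadicBoxes j).card = 2 ^ (j.1 + j.2) := by
  rw [dyadicBoxes, Finset.card_product, Finset.card_range, Finset.card_range, pow_add]

/-- The squared norm of the orthogonal projection of `f` in `L²([0,1)²)` to the span of the tensor
Haar functions of level `j`, each of which has squared norm `1 / 2 ^ (j.1 + j.2)`. -/
def levelEnergy (f : ℝ × ℝ → ℝ) (j : ℕ × ℕ) : ℝ :=
  2 ^ (j.1 + j.2) * ∑ m ∈ dyadicBoxes j, (∫ x in unitSq, f x * haarTensor j m x) ^ 2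

lemma levelEnergy_nonneg (f : ℝ × ℝ → ℝ) (j : ℕ × ℕ) : 0 ≤ levelEnergy f j := by
  unfold levelEnergy; positivity

lemma volume_restrict_unitSq : volume.restrict unitSq = unitVolume.prod unitVolume := by
  rw [unitSq, unitVolume, Measure.prod_restrict, Measure.volume_eq_prod]

instance isFiniteMeasure_restrict_unitSq : IsFiniteMeasure (volume.restrict unitSq) :=
  volume_restrict_unitSq ▸ inferInstance

lemma setIntegral_unitSq_mul (f g : ℝ → ℝ) :
    ∫ x in unitSq, f x.1 * g x.2 = (∫ x, f x ∂unitVolume) * ∫ x, g x ∂unitVolume := by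
  rw [volume_restrict_unitSq, integral_prod_mul]

lemma setIntegral_unitSq_mul_haarTensor (f g : ℝ → ℝ) (j m : ℕ × ℕ) :
    ∫ x in unitSq, f x.1 * g x.2 * haarTensor j m x =
      (∫ x, f x * haarFun j.1 m.1 x ∂unitVolume) * ∫ x, g x * haarFun j.2 m.2 x ∂unitVolume := by
  simp only [haarTensor, mul_mul_mul_comm (f _) (g _)]
  exact setIntegral_unitSq_mul (fun x => f x * haarFun j.1 m.1 x) fun x => g x * haarFun j.2 m.2 x

lemma measurable_haarTensor (j m : ℕ × ℕ) : Measurable (haarTensor j m) :=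
  ((measurable_haarFun _ _).comp measurable_fst).mul ((measurable_haarFun _ _).comp measurable_snd)

lemma norm_haarTensor_le_one (j m : ℕ × ℕ) (x : ℝ × ℝ) : ‖haarTensor j m x‖ ≤ 1 := by
  rw [haarTensor, norm_mul]
  exact mul_le_one₀ (norm_haarFun_le_one _ _ _) (norm_nonneg _) (norm_haarFun_le_one _ _ _)

lemma memLp_haarTensor (j m : ℕ × ℕ) : MemLp (haarTensor j m) 2 (volume.restrict unitSq) :=
  .of_bound (measurable_haarTensor j m).aestronglyMeasurable 1
    (Filter.Eventually.of_forall (norm_haarTensor_le_one j m))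

lemma integral_haarTensor_mul_self {j m : ℕ × ℕ} (hm : m ∈ dyadicBoxes j) :
    ∫ x in unitSq, haarTensor j m x * haarTensor j m x = 1 / 2 ^ (j.1 + j.2) := by
  rw [mem_dyadicBoxes] at hm
  refine (setIntegral_unitSq_mul_haarTensor (haarFun j.1 m.1) (haarFun j.2 m.2) j m).trans ?_
  rw [integral_haarFun_mul_self hm.1, integral_haarFun_mul_self hm.2, pow_add, one_div_mul_one_div]

lemma integral_haarTensor_mul_haarTensor_of_ne {j j' m m' : ℕ × ℕ} (hm : m ∈ dyadicBoxes j)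
    (hm' : m' ∈ dyadicBoxes j') (hne : ¬(j = j' ∧ m = m')) :
    ∫ x in unitSq, haarTensor j m x * haarTensor j' m' x = 0 := by
  rw [mem_dyadicBoxes] at hm hm'
  refine (setIntegral_unitSq_mul_haarTensor (haarFun j.1 m.1) (haarFun j.2 m.2) j' m').trans ?_
  by_cases h : j.1 = j'.1 ∧ m.1 = m'.1
  · have h' : ¬(j.2 = j'.2 ∧ m.2 = m'.2) := fun h' =>
      hne ⟨Prod.ext h.1 h'.1, Prod.ext h.2 h'.2⟩
    rw [integral_haarFun_mul_haarFun_of_ne hm.2 hm'.2 h', mul_zero]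
  · rw [integral_haarFun_mul_haarFun_of_ne hm.1 hm'.1 h, zero_mul]

lemma sum_levelEnergy_le {f : ℝ × ℝ → ℝ} (hf : MemLp f 2 (volume.restrict unitSq))
    (s : Finset (ℕ × ℕ)) : ∑ j ∈ s, levelEnergy f j ≤ ∫ x in unitSq, f x ^ 2 := by
  calc ∑ j ∈ s, levelEnergy f j
      = ∑ a ∈ s.sigma dyadicBoxes, (∫ x in unitSq, f x * haarTensor a.1 a.2 x) ^ 2 /
          ∫ x in unitSq, haarTensor a.1 a.2 x * haarTensor a.1 a.2 x := by
        rw [Finset.sum_sigma]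
        refine Finset.sum_congr rfl fun j _ => ?_
        rw [levelEnergy, Finset.mul_sum]
        refine Finset.sum_congr rfl fun m hm => ?_
        rw [integral_haarTensor_mul_self hm, div_div_eq_mul_div, div_one, mul_comm]
    _ ≤ ∫ x in unitSq, f x ^ 2 := by
        refine sum_sq_integral_mul_div_le (e := fun a : (_ : ℕ × ℕ) × ℕ × ℕ => haarTensor a.1 a.2)
          hf (fun a => memLp_haarTensor a.1 a.2) fun a ha b hb hab => ?_
        rw [Finset.mem_coe, Finset.mem_sigma] at ha hb
        exact integral_haarTensor_mul_haarTensor_of_ne ha.2 hb.2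
          fun h => hab (Sigma.ext h.1 (heq_of_eq h.2))

lemma sum_schauderHat_mul_pow (j : ℕ × ℕ) {n : ℕ} (hn : n ≠ 0) {c : ℝ × ℝ} (hc : c ∈ unitSq) :
    ∑ m ∈ dyadicBoxes j, (schauderHat j.1 m.1 c.1 * schauderHat j.2 m.2 c.2) ^ n =
      (distInt (2 ^ j.1 * c.1) * distInt (2 ^ j.2 * c.2) / 2 ^ (j.1 + j.2)) ^ n := by
  simp only [dyadicBoxes, Finset.sum_product, mul_pow, ← Finset.mul_sum, ← Finset.sum_mul,
    sum_schauderHat_pow _ hn hc.1, sum_schauderHat_pow _ hn hc.2]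
  rw [← mul_pow, div_mul_div_comm, pow_add]

open Finset in
lemma sum_antidiagonal_cluster_levelEnergy_le {f : ℝ × ℝ → ℝ}
    (hf : MemLp f 2 (volume.restrict unitSq)) (m : ℕ) :
    ∑ j ∈ antidiagonal m, cluster (fun u v => levelEnergy f (j.1 + u, j.2 + v)) ≤
      ∫ x in unitSq, f x ^ 2 := by
  refine (sum_antidiagonal_cluster_le (levelEnergy_nonneg f) m).trans ?_
  rw [← sum_biUnion fun n _ n' _ hn => disjoint_left.2 fun j hj hj' => hn ?_]
  · exact sum_levelEnergy_le hf _
  · rw [HasAntidiagonal.mem_antidiagonal] at hj hj'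
    omega

end Tensor

section Discrepancy

variable {N : ℕ} {p : Fin N → ℝ × ℝ}

lemma disc_eq_sum_stepFun (hp : ∀ r, p r ∈ unitSq) (x : ℝ × ℝ) :
    disc N p x = ∑ r, stepFun (p r).1 x.1 * stepFun (p r).2 x.2 - N * (x.1 * x.2) := by
  rw [disc, mul_assoc]
  congr 1
  refine Finset.sum_congr rfl fun r _ => ?_
  have h1 : 0 ≤ (p r).1 := (hp r).1.1
  have h2 : 0 ≤ (p r).2 := (hp r).2.1
  by_cases hx1 : (p r).1 < x.1 <;> by_cases hx2 : (p r).2 < x.2 <;>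
    simp [stepFun, h1, h2, hx1, hx2]

lemma measurable_disc : Measurable (disc N p) := by
  have h_box (c : ℝ × ℝ) :
      MeasurableSet {x : ℝ × ℝ | 0 ≤ c.1 ∧ c.1 < x.1 ∧ 0 ≤ c.2 ∧ c.2 < x.2} :=
    (MeasurableSet.const _).inter ((measurableSet_lt measurable_const measurable_fst).inter
      ((MeasurableSet.const _).inter (measurableSet_lt measurable_const measurable_snd)))
  exact (Finset.measurable_fun_sum _ fun r _ => .ite (h_box (p r)) measurable_const
    measurable_const).sub (by fun_prop)

lemma abs_disc_le {x : ℝ × ℝ} (hx : x ∈ unitSq) : |disc N p x| ≤ N := by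
  obtain ⟨⟨h1, h1'⟩, h2, h2'⟩ := hx
  rw [disc, Finset.sum_boole, mul_assoc]
  refine abs_sub_le_of_nonneg_of_le (by positivity) ?_ (by positivity)
    (mul_le_of_le_one_right (by positivity) (mul_le_one₀ h1'.le h2 h2'.le))
  exact_mod_cast (Finset.card_le_univ _).trans_eq (Fintype.card_fin N)

lemma memLp_disc : MemLp (disc N p) 2 (volume.restrict unitSq) :=
  .of_bound measurable_disc.aestronglyMeasurable N <|
    (ae_restrict_mem (measurableSet_Ico.prod measurableSet_Ico)).mono fun _ => abs_disc_le

lemma integral_disc_mul_haarTensor (hp : ∀ r, p r ∈ unitSq) {j m : ℕ × ℕ}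
    (hm : m ∈ dyadicBoxes j) :
    ∫ x in unitSq, disc N p x * haarTensor j m x =
      ∑ r, schauderHat j.1 m.1 (p r).1 * schauderHat j.2 m.2 (p r).2
        - N / (4 ^ (j.1 + 1) * 4 ^ (j.2 + 1)) := by
  rw [mem_dyadicBoxes] at hm
  have h_integrable {f g : ℝ → ℝ} (hf : Integrable f unitVolume) (hg : Integrable g unitVolume) :
      Integrable (fun x => f x.1 * g x.2 * haarTensor j m x) (volume.restrict unitSq) := by
    rw [volume_restrict_unitSq]
    exact (hf.mul_prod hg).mul_bdd (measurable_haarTensor j m).aestronglyMeasurable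
      (Filter.Eventually.of_forall (norm_haarTensor_le_one j m))
  have h_step (r : Fin N) := h_integrable (integrable_stepFun (p r).1) (integrable_stepFun (p r).2)
  have h_id := h_integrable integrable_id_unitVolume integrable_id_unitVolume
  simp only [disc_eq_sum_stepFun hp, sub_mul, Finset.sum_mul, mul_assoc (N : ℝ)]
  rw [integral_sub (integrable_finsetSum _ fun r _ => h_step r) (h_id.const_mul _),
    integral_finsetSum _ fun r _ => h_step r, integral_const_mul]
  simp only [setIntegral_unitSq_mul_haarTensor, integral_stepFun_mul_haarFun _ hm.1,
    integral_stepFun_mul_haarFun _ hm.2]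
  rw [setIntegral_unitSq_mul_haarTensor (fun x => x) (fun x => x), integral_id_mul_haarFun hm.1,
    integral_id_mul_haarFun hm.2, one_div_mul_one_div, mul_one_div]

lemma levelEnergy_disc_eq (hp : ∀ r, p r ∈ unitSq) (j : ℕ × ℕ) :
    levelEnergy (disc N p) j = 2 ^ (j.1 + j.2) * ∑ m ∈ dyadicBoxes j,
      (∑ r, schauderHat j.1 m.1 (p r).1 * schauderHat j.2 m.2 (p r).2
        - N / (16 * (2 ^ (j.1 + j.2)) ^ 2)) ^ 2 := by
  have h_mean : (4 : ℝ) ^ (j.1 + 1) * 4 ^ (j.2 + 1) = 16 * (2 ^ (j.1 + j.2)) ^ 2 := by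
    rw [← pow_mul, mul_comm _ 2, pow_mul]
    norm_num
    ring
  rw [levelEnergy]
  congr 1
  refine Finset.sum_congr rfl fun m hm => ?_
  rw [integral_disc_mul_haarTensor hp hm, h_mean]

lemma levelEnergy_disc_ge (hp : ∀ r, p r ∈ unitSq) (j : ℕ × ℕ) :
    ((N / 2 ^ (j.1 + j.2)) ^ 2 - (∑ r, gain (N / 2 ^ (j.1 + j.2))
      (16 * distInt (2 ^ j.1 * (p r).1) * distInt (2 ^ j.2 * (p r).2))) / N) / 256 ≤
      levelEnergy (disc N p) j := by
  rcases N.eq_zero_or_pos with rfl | hN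
  · simpa using levelEnergy_nonneg _ _
  set D : ℝ := 2 ^ (j.1 + j.2) with hD
  have hD_pos : 0 < D := by positivity
  set h : Fin N → ℝ := fun r => distInt (2 ^ j.1 * (p r).1) * distInt (2 ^ j.2 * (p r).2)
  have h_sum_sq (r : Fin N) := sum_schauderHat_mul_pow j two_ne_zero (hp r)
  have h_sum (r : Fin N) := sum_schauderHat_mul_pow j one_ne_zero (hp r)
  simp only [pow_one] at h_sum
  have h_lower := card_mul_sq_add_sum_le_sum_sq_sub (dyadicBoxes j) Finset.univ
    (X := fun m r => schauderHat j.1 m.1 (p r).1 * schauderHat j.2 m.2 (p r).2)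
    (fun m r => mul_nonneg (schauderHat_nonneg _ _ _) (schauderHat_nonneg _ _ _)) (N / (16 * D ^ 2))
  simp only [h_sum_sq, h_sum, card_dyadicBoxes, Nat.cast_pow, Nat.cast_ofNat, ← hD] at h_lower
  calc ((N / D) ^ 2 - (∑ r, gain (N / D)
      (16 * distInt (2 ^ j.1 * (p r).1) * distInt (2 ^ j.2 * (p r).2))) / N) / 256
      = D * (D * (N / (16 * D ^ 2)) ^ 2
          + ∑ r, ((h r / D) ^ 2 - 2 * (N / (16 * D ^ 2)) * (h r / D))) := by
        have h_term (r : Fin N) : D * ((h r / D) ^ 2 - 2 * (N / (16 * D ^ 2)) * (h r / D)) =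
            -(gain (N / D) (16 * distInt (2 ^ j.1 * (p r).1) * distInt (2 ^ j.2 * (p r).2)) / N
              / 256) := by
          simp only [gain, h]
          field_simp
          ring
        rw [mul_add, Finset.mul_sum, Finset.sum_congr rfl fun r _ => h_term r,
          Finset.sum_neg_distrib, ← Finset.sum_div, ← Finset.sum_div]
        field_simp
        ring
    _ ≤ D * ∑ m ∈ dyadicBoxes j, (∑ r, schauderHat j.1 m.1 (p r).1 * schauderHat j.2 m.2 (p r).2
          - N / (16 * D ^ 2)) ^ 2 := by gcongr
    _ = levelEnergy (disc N p) j := (levelEnergy_disc_eq hp j).symm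

lemma cluster_levelEnergy_disc_ge (hp : ∀ r, p r ∈ unitSq) {j : ℕ × ℕ}
    (hj : (N : ℝ) / 2 ^ (j.1 + j.2) ∈ Set.Icc (3 / 4) (3 / 2)) :
    317 / 172032 ≤ cluster fun u v => levelEnergy (disc N p) (j.1 + u, j.2 + v) := by
  have hN : (N : ℝ) ≠ 0 := fun h => by norm_num [h] at hj
  set l : ℝ := N / 2 ^ (j.1 + j.2) with hl
  set v : Fin N → Fin 3 → ℝ := fun r => doublingOrbit (2 ^ j.1 * (p r).1)
  set w : Fin N → Fin 3 → ℝ := fun r => doublingOrbit (2 ^ j.2 * (p r).2)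
  have h_level (u t : Fin 3) : 1 / 256 * ((l / 2 ^ (u + t : ℕ)) ^ 2 + (-1 / N) *
      ∑ r, gain (l / 2 ^ (u + t : ℕ)) (16 * v r u * w r t)) ≤
      levelEnergy (disc N p) (j.1 + u, j.2 + t) := by
    have h := levelEnergy_disc_ge hp (j.1 + u, j.2 + t)
    have h_orbit (a : ℕ) (y : ℝ) (u : Fin 3) : distInt (2 ^ (a + u : ℕ) * y) =
        doublingOrbit (2 ^ a * y) u := by
      rw [doublingOrbit_apply, add_comm, pow_add, mul_assoc]
    have h_scale : (N : ℝ) / 2 ^ (j.1 + u + (j.2 + t)) = l / 2 ^ (u + t : ℕ) := by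
      rw [hl, div_div, ← pow_add, add_add_add_comm]
    simp only [h_orbit, h_scale] at h
    exact (by ring : _ = _).trans_le h
  have h_sq : cluster (fun u t => (l / 2 ^ (u + t : ℕ)) ^ 2) = 21 / 16 * l ^ 2 := by
    simp only [cluster, Fin.val_zero, Fin.val_one, Fin.val_two]
    ring
  calc (317 / 172032 : ℝ)
      = 1 / 256 * (21 / 16 * l ^ 2 + (-1 / N) * ∑ _r : Fin N, (21 / 16 * l ^ 2 - 317 / 672)) := by
        rw [Finset.sum_const, Finset.card_univ, Fintype.card_fin, nsmul_eq_mul]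
        field_simp
        ring
    _ ≤ 1 / 256 * (21 / 16 * l ^ 2 + (-1 / N) * ∑ r, clusterGain l (v r) (w r)) := by
        have h_neg : (-1 / N : ℝ) ≤ 0 :=
          div_nonpos_of_nonpos_of_nonneg (by norm_num) (by positivity)
        gcongr 1 / 256 * (_ + ?_)
        exact mul_le_mul_of_nonpos_left
          (Finset.sum_le_sum fun r _ => clusterGain_doublingOrbit_le hj _ _) h_neg
    _ = cluster fun u t => 1 / 256 * ((l / 2 ^ (u + t : ℕ)) ^ 2 + (-1 / N) *
          ∑ r, gain (l / 2 ^ (u + t : ℕ)) (16 * v r u * w r t)) := by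
        rw [cluster_mul_left, cluster_add, cluster_mul_left, cluster_sum, h_sq]
        rfl
    _ ≤ cluster fun u t => levelEnergy (disc N p) (j.1 + u, j.2 + t) := cluster_mono h_level

open Finset in
lemma add_one_mul_le_integral_disc_sq (hp : ∀ r, p r ∈ unitSq) {m : ℕ}
    (hm : (N : ℝ) / 2 ^ m ∈ Set.Icc (3 / 4) (3 / 2)) :
    (m + 1) * (317 / 172032) ≤ ∫ x in unitSq, disc N p x ^ 2 :=
  calc (m + 1) * (317 / 172032 : ℝ) = ∑ _j ∈ antidiagonal m, (317 / 172032 : ℝ) := by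
        rw [sum_const, Nat.card_antidiagonal, nsmul_eq_mul, Nat.cast_succ]
    _ ≤ ∑ j ∈ antidiagonal m, cluster fun u v => levelEnergy (disc N p) (j.1 + u, j.2 + v) :=
        sum_le_sum fun j hj => cluster_levelEnergy_disc_ge hp <| by
          rwa [HasAntidiagonal.mem_antidiagonal.1 hj]
    _ ≤ ∫ x in unitSq, disc N p x ^ 2 := sum_antidiagonal_cluster_levelEnergy_le memLp_disc m

end Discrepancy

lemma exists_div_two_pow_mem_Icc {x : ℝ} (hx : 3 / 4 ≤ x) :
    ∃ m : ℕ, x / 2 ^ m ∈ Set.Icc (3 / 4 : ℝ) (3 / 2) := by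
  obtain ⟨m, h_le, h_lt⟩ := exists_nat_pow_near (x := 4 * x / 3) (y := 2) (by linarith) one_lt_two
  refine ⟨m, ?_, ?_⟩
  · rw [le_div_iff₀ (by positivity)]
    linarith
  · rw [div_le_iff₀ (by positivity)]
    rw [pow_succ] at h_lt
    linarith

/-- For every `N ≥ 2` and every `N`-point set `P ⊂ [0,1)²`,
`‖D_P | L₂‖ ≥ √(317/(172032·log 2)) · √(log N)  (= 0.0515599… · √(log N))`. -/
theorem l2disc_lower_bound (N : ℕ) (hN : 2 ≤ N)
    (p : Fin N → ℝ × ℝ) (hp : ∀ i, p i ∈ unitSq) :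
    Real.sqrt (317 / (172032 * Real.log 2)) * Real.sqrt (Real.log N) ≤ L2disc N p := by
  have hN_ge : (2 : ℝ) ≤ N := by exact_mod_cast hN
  obtain ⟨m, hm⟩ := exists_div_two_pow_mem_Icc (x := N) (by linarith)
  have h_log : Real.log N ≤ (m + 1) * Real.log 2 := by
    rw [← Nat.cast_succ, ← Real.log_pow, pow_succ]
    refine Real.log_le_log (by linarith) ?_
    linarith [(div_le_iff₀ (by positivity)).1 hm.2, pow_pos (zero_lt_two' ℝ) m]
  rw [L2disc, ← Real.sqrt_mul (by positivity)]
  refine Real.sqrt_le_sqrt ?_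
  calc 317 / (172032 * Real.log 2) * Real.log N
      ≤ 317 / (172032 * Real.log 2) * ((m + 1) * Real.log 2) := by gcongr
    _ = (m + 1) * (317 / 172032) := by field_simp
    _ ≤ ∫ x in unitSq, disc N p x ^ 2 := add_one_mul_le_integral_disc_sq hp hm

end
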